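/- arXiv:1705.00858 — 2 statements merged into one kernel-verified Lean document; each statement's English description precedes it below -/
import Mathlib

section
/- Let J ⊆ [0,1] be a closed interval, h a gauge function, and {I_j} a Cantor construction with Cantor set C and Cantor measure ν. Suppose there exist r > 0 and N ∈ ℕ such that h(I_j) ≤ r·ν(I_j) for every binary word j with |j| ≥ N and I_j ∩ J ≠ ∅. Then μ_h(J ∩ C) ≤ r·ν(J). -/
/-!
For large `n`, the level-`n` basic intervals that meet `J = [u, v]` cover `J ∩ C`, are pairwise
disjoint (`CantorConstruction.disjoint_I`), have small diameter, and lie in a small closed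
thickening of `J`. Hence their total `h`-value is at most `r` times the `ν`-measure of that
thickening (`iInf_cover_le`), and continuity of the finite measure `ν` from above lets the
thickening shrink to `J`.

Since covers are indexed by `ℕ`, the sequence of basic intervals is padded by intervals around `0`
whose total `h`-value is as small as desired; these exist because `h (0, δ) → 0`.
-/

open MeasureTheory Set Filter
open scoped ENNReal

noncomputable section

/-- `Iv w δ` is the closed interval with midpoint `w` and diameter `δ`. -/
def Iv (w δ : ℝ) : Set ℝ := Set.Icc (w - δ / 2) (w + δ / 2)

/-- A Cantor construction on `ℝ`: a family of nonempty closed intervals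
`I j = [a j, b j]` indexed by finite binary words `j : List Bool`, such that
`I (j ++ [false])` and `I (j ++ [true])` are disjoint subsets of `I j` sharing,
respectively, the left and the right endpoint with `I j`, and such that the
maximal diameter at level `n` tends to `0`. -/
structure CantorConstruction where
  a : List Bool → ℝ
  b : List Bool → ℝ
  le : ∀ j, a j ≤ b j
  left0 : ∀ j, a (j ++ [false]) = a j
  right1 : ∀ j, b (j ++ [true]) = b j
  sub0 : ∀ j, b (j ++ [false]) ≤ b j
  sub1 : ∀ j, a j ≤ a (j ++ [true])
  disj : ∀ j, b (j ++ [false]) < a (j ++ [true])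
  shrink : ∀ ε > (0 : ℝ), ∃ N : ℕ, ∀ j : List Bool, N ≤ j.length → b j - a j < ε

namespace CantorConstruction

variable (C : CantorConstruction)

/-- The basic interval `I_j`. -/
def I (j : List Bool) : Set ℝ := Set.Icc (C.a j) (C.b j)

/-- The diameter `|I_j|` of the basic interval `I_j`. -/
def len (j : List Bool) : ℝ := C.b j - C.a j

/-- The midpoint of the basic interval `I_j`. -/
def mid (j : List Bool) : ℝ := (C.a j + C.b j) / 2

/-- The gap `G_j = I_j \ (I_{j0} ∪ I_{j1})`. -/
def gap (j : List Bool) : Set ℝ :=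
  Set.Ioo (C.b (j ++ [false])) (C.a (j ++ [true]))

/-- The diameter `|G_j|` of the gap `G_j`. -/
def gapLen (j : List Bool) : ℝ := C.a (j ++ [true]) - C.b (j ++ [false])

/-- The Cantor set `C = ⋂_n ⋃_{|j| = n} I_j` associated to the construction. -/
def cantorSet : Set ℝ := ⋂ n : ℕ, ⋃ j ∈ {j : List Bool | j.length = n}, C.I j

/-- `ν` is the Cantor measure of the construction: a Borel probability measure on `ℝ`
with `ν (I_j) = 2^{-|j|}` for every binary word `j`. -/
def IsCantorMeasure (ν : Measure ℝ) : Prop :=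
  IsProbabilityMeasure ν ∧ ∀ j : List Bool, ν (C.I j) = (2 ^ j.length : ℝ≥0∞)⁻¹

end CantorConstruction

/-- `word k l` is the length-`k` binary expansion of `l` (most significant digit first),
so that `I_l^k = I (word k l)` in the step/position indexing. -/
def word : ℕ → ℕ → List Bool
  | 0, _ => []
  | k + 1, l => word k (l / 2) ++ [decide (l % 2 = 1)]

/-- `h : ℝ × (0,∞) → (0,∞)` is a gauge function: continuous, positive,
`h (w, δ) → 0` as `δ → 0` for every `w`, and increasing as an interval function. -/
def IsGauge (h : ℝ → ℝ → ℝ) : Prop :=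
  ContinuousOn (Function.uncurry h) {p : ℝ × ℝ | 0 < p.2} ∧
  (∀ w δ : ℝ, 0 < δ → 0 < h w δ) ∧
  (∀ w : ℝ, Tendsto (h w) (nhdsWithin 0 (Set.Ioi 0)) (nhds 0)) ∧
  (∀ w δ w' δ' : ℝ, 0 < δ → 0 < δ' → Iv w δ ⊆ Iv w' δ' → h w δ ≤ h w' δ')

/-- The generalized Hausdorff measure `μ_h` associated to a gauge function `h`:
`μ_h(E) = lim_{δ → 0} inf { Σ_k h (w_k, δ_k) }`, the infimum being over countable
covers of `E` by intervals `Iv w_k δ_k` with `0 < δ_k ≤ δ`. -/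
def muH (h : ℝ → ℝ → ℝ) (E : Set ℝ) : ℝ≥0∞ :=
  ⨆ (δ : ℝ) (_ : 0 < δ),
    ⨅ (c : ℕ → ℝ × ℝ)
      (_ : (∀ k, 0 < (c k).2 ∧ (c k).2 ≤ δ) ∧ E ⊆ ⋃ k, Iv (c k).1 (c k).2),
      ∑' k, ENNReal.ofReal (h (c k).1 (c k).2)

/-- Second partial derivative `∂²h/∂w²`. -/
def d11 (h : ℝ → ℝ → ℝ) (w δ : ℝ) : ℝ :=
  deriv (fun x => deriv (fun y => h y δ) x) w

/-- Mixed second partial derivative `∂²h/∂w∂δ`. -/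
def d12 (h : ℝ → ℝ → ℝ) (w δ : ℝ) : ℝ :=
  deriv (fun x => deriv (fun d => h x d) δ) w

/-- Second partial derivative `∂²h/∂δ²`. -/
def d22 (h : ℝ → ℝ → ℝ) (w δ : ℝ) : ℝ :=
  deriv (fun d => deriv (fun e => h w e) d) δ

end

namespace CantorConstruction

variable (C : CantorConstruction)

lemma len_pos (j : List Bool) : 0 < C.len j := by
  have h1 := C.left0 j
  have h2 := C.right1 j
  have h3 := C.disj j
  have h4 := C.le (j ++ [false])
  have h5 := C.le (j ++ [true])
  unfold len
  linarith

lemma Iv_mid_len (j : List Bool) : Iv (C.mid j) (C.len j) = C.I j := by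
  unfold Iv I mid len
  congr 1 <;> ring

lemma I_append_subset (j : List Bool) (x : Bool) : C.I (j ++ [x]) ⊆ C.I j := by
  cases x
  · exact Icc_subset_Icc (C.left0 j).ge (C.sub0 j)
  · exact Icc_subset_Icc (C.sub1 j) (C.right1 j).le

lemma disjoint_I_append (j : List Bool) : Disjoint (C.I (j ++ [false])) (C.I (j ++ [true])) := by
  rw [Set.disjoint_left]
  intro y h0 h1
  exact absurd (h0.2.trans_lt (C.disj j)) (not_lt.2 h1.1)

lemma disjoint_I (n : ℕ) : ∀ j k : List Bool, j.length = n → k.length = n → j ≠ k →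
    Disjoint (C.I j) (C.I k) := by
  induction n with
  | zero =>
    intro j k hj hk hne
    rw [List.length_eq_zero_iff] at hj hk
    exact absurd (hj.trans hk.symm) hne
  | succ n ih =>
    intro j k hj hk hne
    rcases List.eq_nil_or_concat' j with rfl | ⟨j', x, rfl⟩
    · simp at hj
    rcases List.eq_nil_or_concat' k with rfl | ⟨k', y, rfl⟩
    · simp at hk
    by_cases hjk : j' = k'
    · subst hjk
      cases x <;> cases y
      · exact absurd rfl hne
      · exact C.disjoint_I_append j'
      · exact (C.disjoint_I_append j').symm
      · exact absurd rfl hne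
    · exact (ih j' k' (by simpa using hj) (by simpa using hk) hjk).mono
        (C.I_append_subset j' x) (C.I_append_subset k' y)

end CantorConstruction

/-- Covers of `J ∩ C` by basic intervals of a sufficiently high level, padded by intervals around
`0` of total `h`-value at most `ε`. -/
lemma iInf_cover_le (u v : ℝ) (h : ℝ → ℝ → ℝ) (hg : IsGauge h)
    (C : CantorConstruction) (ν : Measure ℝ) [IsFiniteMeasure ν]
    (r : ℝ) (hr : 0 < r) (N : ℕ)
    (hyp : ∀ j : List Bool, N ≤ j.length → (C.I j ∩ Set.Icc u v).Nonempty →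
      h (C.mid j) (C.len j) ≤ r * (ν (C.I j)).toReal)
    (δ : ℝ) (hδ : 0 < δ) (ε : ℝ) (hε : 0 < ε) :
    (⨅ (c : ℕ → ℝ × ℝ)
      (_ : (∀ k, 0 < (c k).2 ∧ (c k).2 ≤ δ) ∧
        Set.Icc u v ∩ C.cantorSet ⊆ ⋃ k, Iv (c k).1 (c k).2),
      ∑' k, ENNReal.ofReal (h (c k).1 (c k).2)) ≤
    ENNReal.ofReal r * ν (Metric.cthickening ε (Set.Icc u v)) + ENNReal.ofReal ε := by
  classical
  obtain ⟨M, hM⟩ := C.shrink (min δ ε) (lt_min hδ hε)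
  let n := max M N
  let S : Set (List Bool) := {j | j.length = n ∧ (C.I j ∩ Set.Icc u v).Nonempty}
  have hlen : ∀ j ∈ S, C.len j < min δ ε := fun j hj =>
    hM j ((le_max_left M N).trans hj.1.ge)
  obtain ⟨e, he0, hesum⟩ := ENNReal.exists_pos_sum_of_countable
    (ENNReal.ofReal_pos.2 hε).ne' ℕ
  have hpad : ∀ k, ∃ d : ℝ, (0 < d ∧ d ≤ δ) ∧ h 0 d ≤ e k := by
    intro k
    have h1 : ∀ᶠ d in nhdsWithin (0 : ℝ) (Set.Ioi 0), h 0 d < e k :=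
      (hg.2.2.1 0).eventually_lt_const (NNReal.coe_pos.2 (he0 k))
    obtain ⟨d, hd1, hd2⟩ := (h1.and (Ioc_mem_nhdsGT hδ)).exists
    exact ⟨d, hd2, hd1.le⟩
  choose d hd hhd using hpad
  obtain ⟨φ⟩ : Nonempty (ℕ ≃ List Bool) := nonempty_equiv_of_countable
  let c : ℕ → ℝ × ℝ := fun k => if φ k ∈ S then (C.mid (φ k), C.len (φ k)) else (0, d k)
  let f : List Bool → ℝ≥0∞ := S.indicator fun j => ENNReal.ofReal r * ν (C.I j)
  have hc : (∀ k, 0 < (c k).2 ∧ (c k).2 ≤ δ) ∧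
      Set.Icc u v ∩ C.cantorSet ⊆ ⋃ k, Iv (c k).1 (c k).2 := by
    constructor
    · intro k
      by_cases hk : φ k ∈ S
      · simp only [c, if_pos hk]
        exact ⟨C.len_pos _, ((hlen _ hk).trans_le (min_le_left _ _)).le⟩
      · simp only [c, if_neg hk]
        exact hd k
    · rintro x ⟨hxJ, hxC⟩
      have hx := Set.mem_iInter.1 hxC n
      simp only [Set.mem_iUnion, Set.mem_ofPred_eq] at hx
      obtain ⟨j, hjn, hxj⟩ := hx
      have hjS : φ (φ.symm j) ∈ S := by
        rw [Equiv.apply_symm_apply]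
        exact ⟨hjn, x, hxj, hxJ⟩
      refine Set.mem_iUnion.2 ⟨φ.symm j, ?_⟩
      simp only [c, if_pos hjS]
      rw [C.Iv_mid_len, Equiv.apply_symm_apply]
      exact hxj
  have hterm : ∀ k, ENNReal.ofReal (h (c k).1 (c k).2) ≤ f (φ k) + e k := by
    intro k
    by_cases hk : φ k ∈ S
    · simp only [c, f, if_pos hk, Set.indicator_of_mem hk]
      refine le_add_right ?_
      rw [← ENNReal.ofReal_toReal (measure_ne_top ν (C.I (φ k))), ← ENNReal.ofReal_mul hr.le]
      exact ENNReal.ofReal_le_ofReal (hyp _ ((le_max_right M N).trans hk.1.ge) hk.2)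
    · simp only [c, if_neg hk]
      refine le_add_left ?_
      rw [← ENNReal.ofReal_coe_nnreal]
      exact ENNReal.ofReal_le_ofReal (hhd k)
  have hunion : ∑' j : S, ν (C.I j) = ν (⋃ j ∈ S, C.I j) :=
    (measure_biUnion S.to_countable
      (fun j hj k hk hne => C.disjoint_I n j k hj.1 hk.1 hne)
      (fun _ _ => measurableSet_Icc)).symm
  have hsub : (⋃ j ∈ S, C.I j) ⊆ Metric.cthickening ε (Set.Icc u v) := by
    refine Set.iUnion₂_subset fun j hj x hx => ?_
    obtain ⟨y, hyI, hyJ⟩ := hj.2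
    exact Metric.mem_cthickening_of_dist_le x y ε _ hyJ
      ((Real.dist_le_of_mem_Icc hx hyI).trans ((hlen j hj).trans_le (min_le_right _ _)).le)
  calc _ ≤ ∑' k, ENNReal.ofReal (h (c k).1 (c k).2) := iInf₂_le c hc
    _ ≤ ∑' k, (f (φ k) + e k) := ENNReal.tsum_le_tsum hterm
    _ = (∑' j, f j) + ∑' k, (e k : ℝ≥0∞) := by rw [ENNReal.tsum_add, φ.tsum_eq f]
    _ = ENNReal.ofReal r * ν (⋃ j ∈ S, C.I j) + ∑' k, (e k : ℝ≥0∞) := by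
        rw [← tsum_subtype S, ENNReal.tsum_mul_left, hunion]
    _ ≤ _ := by gcongr

/-- If `h(I_j) ≤ r·ν(I_j)` for every long enough word `j` with
`I_j ∩ J ≠ ∅`, then `μ_h(J ∩ C) ≤ r·ν(J)`. -/
theorem statement2 (u v : ℝ) (hu : 0 ≤ u) (huv : u ≤ v) (hv : v ≤ 1)
    (h : ℝ → ℝ → ℝ) (hg : IsGauge h)
    (C : CantorConstruction) (ν : Measure ℝ) (hν : C.IsCantorMeasure ν)
    (r : ℝ) (hr : 0 < r) (N : ℕ)
    (hyp : ∀ j : List Bool, N ≤ j.length → (C.I j ∩ Set.Icc u v).Nonempty →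
      h (C.mid j) (C.len j) ≤ r * (ν (C.I j)).toReal) :
    muH h (Set.Icc u v ∩ C.cantorSet) ≤ ENNReal.ofReal r * ν (Set.Icc u v) := by
  have := hν.1
  refine iSup₂_le fun δ hδ => ?_
  have h1 : Tendsto (fun ε => ν (Metric.cthickening ε (Set.Icc u v))) (nhds 0)
      (nhds (ν (Set.Icc u v))) :=
    tendsto_measure_cthickening_of_isClosed ⟨1, one_pos, measure_ne_top _ _⟩ isClosed_Icc
  have h2 : Tendsto (fun ε : ℝ => ENNReal.ofReal ε) (nhds 0) (nhds 0) := by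
    simpa using ENNReal.tendsto_ofReal (tendsto_id (α := ℝ) (x := nhds 0))
  have h3 := ((ENNReal.Tendsto.const_mul (a := ENNReal.ofReal r) h1
    (Or.inr ENNReal.ofReal_ne_top)).add h2).mono_left
    (nhdsWithin_le_nhds (s := Set.Ioi (0 : ℝ)))
  rw [add_zero] at h3
  refine ge_of_tendsto h3 ?_
  filter_upwards [self_mem_nhdsWithin] with ε hε
  exact iInf_cover_le u v h hg C ν r hr N hyp δ hδ ε hε
end

section
/- Let {I_j} be a Cantor construction with gaps G_j and Cantor measure ν. Then the following are equivalent: (i) there exists N ∈ ℕ such that for every binary word j with |j| ≥ N and every ρ ∈ [0,1], ν(ρ ·_L (G_j ∪ I_{j1})) ≤ ρ·ν(I_{j1}); (ii) there exists N ∈ ℕ such that for every binary word j with |j| ≥ N and every m ∈ ℕ, 1/2^m ≤ (|G_j| + |I_{j10^m}|)/(|G_j| + |I_{j1}|). -/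
/-!
The function `x ↦ ν (b_{j0}, x]` is a staircase on `G_j ∪ I_{j1}`, and (i) says that it stays below
the chord joining the endpoints of its graph. Gaps are `ν`-null, so `ν (b_{j0}, b_{j10^m}]` is
`2^{-m} ν(I_{j1})`, and (ii) says that the staircase lies below the chord at the points `b_{j10^m}`.
Hence (i) implies (ii).

Conversely (`staircase_approx`), assume (ii) and let `b_{j0} < x ≤ b_{j1}`. If `x ≤ b_{j10^m}` for
every `m`, then `ν (b_{j0}, x] = 0`. Otherwise `x` lies in `G_k ∪ I_{k1}` for a unique `k = j10^m`,
whose endpoints are `b_{j10^{m+1}}` and `b_{j10^m}`. At both of these the staircase lies below the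
chord of `j`, so the chord of `k` lies below the chord of `j` in between; it thus suffices to
compare the staircase with the chord of `k`. This reduction does not terminate, but it can be
started from the trivial bound `ν (b_{k0}, x] ≤ ν(I_{k1})`, and `k` is longer than `j`, so after `n`
reductions the error is at most `2^{-n} ν(I_{j1})`. Letting `n → ∞` gives (i).
-/

open MeasureTheory Set Filter
open scoped ENNReal

namespace CantorConstruction

variable (C : CantorConstruction)

lemma a_zeros (j : List Bool) (m : ℕ) : C.a (j ++ List.replicate m false) = C.a j := by
  induction m with
  | zero => simp
  | succ m ih => rw [List.replicate_succ', ← List.append_assoc, C.left0, ih]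

lemma b_zeros_le (j : List Bool) (m : ℕ) : C.b (j ++ List.replicate m false) ≤ C.b j := by
  induction m with
  | zero => simp
  | succ m ih =>
    rw [List.replicate_succ', ← List.append_assoc]
    exact (C.sub0 _).trans ih

lemma gapLen_add_len (j : List Bool) (m : ℕ) :
    C.gapLen j + C.len (j ++ [true] ++ List.replicate m false) =
      C.b (j ++ [true] ++ List.replicate m false) - C.b (j ++ [false]) := by
  simp only [gapLen, len, C.a_zeros]; ring

lemma chord_pos (j : List Bool) : 0 < C.b (j ++ [true]) - C.b (j ++ [false]) := by
  linarith [C.disj j, C.le (j ++ [true])]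

variable {C} {ν : Measure ℝ}

lemma IsCantorMeasure.real_I (hν : C.IsCantorMeasure ν) (j : List Bool) :
    ν.real (C.I j) = (2 ^ j.length : ℝ)⁻¹ := by
  simp [Measure.real, hν.2 j]

lemma IsCantorMeasure.real_gap (hν : C.IsCantorMeasure ν) (j : List Bool) :
    ν.real (C.gap j) = 0 := by
  have := hν.1
  have hd := C.disj j
  have h0 := C.le (j ++ [false])
  have h1 := C.le (j ++ [true])
  have hsub : C.I (j ++ [false]) ∪ C.gap j ∪ C.I (j ++ [true]) ⊆ C.I j := by
    have := C.sub0 j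
    have := C.sub1 j
    have := C.left0 j
    have := C.right1 j
    rintro x ((⟨hx, hx'⟩ | ⟨hx, hx'⟩) | ⟨hx, hx'⟩) <;> constructor <;> linarith
  have d1 : Disjoint (C.I (j ++ [false])) (C.gap j) := by
    rw [Set.disjoint_left]
    rintro x ⟨_, hx⟩ ⟨hx', _⟩
    linarith
  have d2 : Disjoint (C.I (j ++ [false]) ∪ C.gap j) (C.I (j ++ [true])) := by
    rw [Set.disjoint_left]
    rintro x (⟨_, hx⟩ | ⟨_, hx⟩) ⟨hx', _⟩ <;> linarith
  have h := measureReal_mono (μ := ν) hsub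
  rw [measureReal_union d2 measurableSet_Icc, measureReal_union d1 measurableSet_Ioo,
    hν.real_I, hν.real_I, hν.real_I] at h
  simp only [List.length_append, List.length_singleton, pow_succ, mul_inv] at h
  have := measureReal_nonneg (μ := ν) (s := C.gap j)
  linarith

/-- The staircase of `j` has height at most `2^{-m} ν(I_{j1})` at the point `b_{j10^m}`. -/
lemma IsCantorMeasure.real_step_le (hν : C.IsCantorMeasure ν) (j : List Bool) (m : ℕ) :
    ν.real (Ioc (C.b (j ++ [false])) (C.b (j ++ [true] ++ List.replicate m false)))
      ≤ (2 ^ (j.length + 1) : ℝ)⁻¹ * (2 ^ m : ℝ)⁻¹ := by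
  have := hν.1
  have hsub : Ioc (C.b (j ++ [false])) (C.b (j ++ [true] ++ List.replicate m false)) ⊆
      C.gap j ∪ C.I (j ++ [true] ++ List.replicate m false) := by
    rintro x ⟨hx, hx'⟩
    rcases lt_or_ge x (C.a (j ++ [true])) with h | h
    · exact Or.inl ⟨hx, h⟩
    · exact Or.inr ⟨by rwa [C.a_zeros], hx'⟩
  refine (measureReal_mono hsub).trans ((measureReal_union_le _ _).trans ?_)
  rw [hν.real_gap, hν.real_I]
  refine le_of_eq ?_
  simp only [List.length_append, List.length_singleton, List.length_replicate, pow_add, mul_inv,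
    zero_add]

/-- The staircase lies below its chord up to an error which decreases with the number `n` of
reductions from a word `j` to a longer word `j10^m`. -/
lemma IsCantorMeasure.staircase_approx (hν : C.IsCantorMeasure ν) {N : ℕ}
    (H : ∀ j : List Bool, N ≤ j.length → ∀ m : ℕ,
      (2 ^ m : ℝ)⁻¹ * (C.b (j ++ [true]) - C.b (j ++ [false])) ≤
        C.b (j ++ [true] ++ List.replicate m false) - C.b (j ++ [false]))
    (n : ℕ) : ∀ j : List Bool, N ≤ j.length → ∀ x, C.b (j ++ [false]) ≤ x → x ≤ C.b (j ++ [true]) →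
      ν.real (Ioc (C.b (j ++ [false])) x) ≤
        (x - C.b (j ++ [false])) / (C.b (j ++ [true]) - C.b (j ++ [false])) *
          (2 ^ (j.length + 1) : ℝ)⁻¹ + (2 ^ (j.length + 1) : ℝ)⁻¹ * (2 ^ n : ℝ)⁻¹ := by
  have := hν.1
  induction n with
  | zero =>
    intro j _ x hx hx'
    have h1 : ν.real (Ioc (C.b (j ++ [false])) x) ≤ _ :=
      (measureReal_mono (Ioc_subset_Ioc_right (by simpa using hx'))).trans (hν.real_step_le j 0)
    have hD := C.chord_pos j
    have h2 : 0 ≤ (x - C.b (j ++ [false])) / (C.b (j ++ [true]) - C.b (j ++ [false])) *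
        (2 ^ (j.length + 1) : ℝ)⁻¹ :=
      mul_nonneg (div_nonneg (by linarith) hD.le) (by positivity)
    linarith
  | succ n ih =>
    intro j hj x hx hx'
    have hD := C.chord_pos j
    have hP : (0 : ℝ) < (2 ^ (j.length + 1) : ℝ)⁻¹ := by positivity
    by_cases hex : ∃ m, C.b (j ++ [true] ++ List.replicate m false) < x
    · classical
      obtain ⟨m, hm, hmin⟩ : ∃ m, C.b (j ++ [true] ++ List.replicate (m + 1) false) < x ∧
          x ≤ C.b (j ++ [true] ++ List.replicate m false) := by
        obtain ⟨m, hm⟩ : ∃ m, Nat.find hex = m + 1 := by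
          refine Nat.exists_eq_succ_of_ne_zero fun h0 => ?_
          have := Nat.find_spec hex
          rw [h0] at this
          simp only [List.replicate_zero, List.append_nil] at this
          linarith
        refine ⟨m, hm ▸ Nat.find_spec hex, not_lt.1 (Nat.find_min hex (by omega))⟩
      have hlen : (j ++ [true] ++ List.replicate m false).length = j.length + 1 + m := by
        simp only [List.length_append, List.length_singleton, List.length_replicate]
      have e1 : C.b (j ++ [true] ++ List.replicate m false ++ [false]) =
          C.b (j ++ [true] ++ List.replicate (m + 1) false) := by
        rw [List.replicate_succ', List.append_assoc _ _ [false]]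
      have e2 := C.right1 (j ++ [true] ++ List.replicate m false)
      have hD' := C.chord_pos (j ++ [true] ++ List.replicate m false)
      have key := ih (j ++ [true] ++ List.replicate m false) (by omega) x
        (by rw [e1]; exact hm.le) (by rw [e2]; exact hmin)
      rw [hlen, e1, e2] at key
      rw [e1, e2] at hD'
      have hA := H j hj (m + 1)
      have hB := H j hj m
      have hS := hν.real_step_le j (m + 1)
      have hU : ν.real (Ioc (C.b (j ++ [false])) x) ≤
          ν.real (Ioc (C.b (j ++ [false])) (C.b (j ++ [true] ++ List.replicate (m + 1) false))) +
          ν.real (Ioc (C.b (j ++ [true] ++ List.replicate (m + 1) false)) x) :=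
        (measureReal_mono Ioc_subset_Ioc_union_Ioc).trans (measureReal_union_le _ _)
      have hq1 : (2 ^ (m + 1) : ℝ)⁻¹ ≤ 2⁻¹ := by
        rw [pow_succ, mul_inv]
        exact mul_le_of_le_one_left (by norm_num) (inv_le_one_of_one_le₀ (one_le_pow₀ (by norm_num)))
      have hq2 : (2 ^ m : ℝ)⁻¹ = 2 * (2 ^ (m + 1) : ℝ)⁻¹ := by
        rw [pow_succ, mul_inv]; ring
      have hq3 : (2 ^ (j.length + 1 + m + 1) : ℝ)⁻¹ =
          (2 ^ (j.length + 1) : ℝ)⁻¹ * (2 ^ (m + 1) : ℝ)⁻¹ := by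
        rw [add_assoc (j.length + 1), pow_add, mul_inv]
      have hq4 : (2 ^ (n + 1) : ℝ)⁻¹ = 2⁻¹ * (2 ^ n : ℝ)⁻¹ := by
        rw [pow_succ, mul_inv]; ring
      rw [hq3] at key
      rw [hq2] at hB
      rw [hq4]
      have he : (0 : ℝ) < (2 ^ n : ℝ)⁻¹ := by positivity
      generalize (2 ^ n : ℝ)⁻¹ = e at *
      generalize (2 ^ (m + 1) : ℝ)⁻¹ = q at *
      generalize (2 ^ (j.length + 1) : ℝ)⁻¹ = P at *
      generalize C.b (j ++ [true] ++ List.replicate (m + 1) false) = L' at *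
      generalize C.b (j ++ [true] ++ List.replicate m false) = R' at *
      generalize C.b (j ++ [true]) - C.b (j ++ [false]) = D at *
      generalize C.b (j ++ [false]) = L at *
      -- `t` is the position of `x` in the interval `[L', R']` belonging to the longer word.
      obtain ⟨t, ht⟩ : ∃ t, t = (x - L') / (R' - L') := ⟨_, rfl⟩
      have ht0 : 0 ≤ t := ht ▸ div_nonneg (by linarith) hD'.le
      have ht1 : t ≤ 1 := by rw [ht, div_le_one hD']; linarith
      have hxt : x = L' + t * (R' - L') := by rw [ht]; field_simp; ring
      have hline : (1 + t) * q ≤ (x - L) / D := by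
        rw [le_div_iff₀ hD]
        nlinarith [mul_le_mul_of_nonneg_left hA (sub_nonneg.2 ht1),
          mul_le_mul_of_nonneg_left hB ht0]
      rw [← ht] at key
      have h1 := mul_le_mul_of_nonneg_right hline hP.le
      have h2 : P * q * e ≤ P * (2⁻¹ * e) := by
        rw [mul_assoc]
        gcongr
      nlinarith
    · push Not at hex
      have h2 : 0 ≤ (x - C.b (j ++ [false])) / (C.b (j ++ [true]) - C.b (j ++ [false])) *
          (2 ^ (j.length + 1) : ℝ)⁻¹ :=
        mul_nonneg (div_nonneg (by linarith) hD.le) hP.le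
      have h1 : ν.real (Ioc (C.b (j ++ [false])) x) ≤ _ :=
        (measureReal_mono (Ioc_subset_Ioc_right (hex (n + 1)))).trans (hν.real_step_le j (n + 1))
      linarith

end CantorConstruction

/-- Lemma on the staircase. For a Cantor construction with Cantor
measure `ν`, the following are equivalent: (i) for all long enough words `j` and all
`ρ ∈ [0,1]`, `ν(ρ ·_L (G_j ∪ I_{j1})) ≤ ρ·ν(I_{j1})`; (ii) for all long enough words
`j` and all `m`, `1/2^m ≤ (|G_j| + |I_{j10^m}|)/(|G_j| + |I_{j1}|)`.
Here `G_j ∪ I_{j1}` is the interval with left endpoint `b_{j0}` and right endpoint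
`b_{j1}`, and `ρ ·_L S` is its leftmost `ρ`-proportion. -/
theorem statement6 (C : CantorConstruction) (ν : Measure ℝ)
    (hν : C.IsCantorMeasure ν) :
    (∃ N : ℕ, ∀ j : List Bool, N ≤ j.length → ∀ ρ ∈ Set.Icc (0 : ℝ) 1,
      ν (Set.Ioc (C.b (j ++ [false]))
          (C.b (j ++ [false]) + ρ * (C.b (j ++ [true]) - C.b (j ++ [false]))))
        ≤ ENNReal.ofReal ρ * ν (C.I (j ++ [true]))) ↔
    (∃ N : ℕ, ∀ j : List Bool, N ≤ j.length → ∀ m : ℕ,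
      (1 : ℝ) / 2 ^ m ≤
        (C.gapLen j + C.len (j ++ [true] ++ List.replicate m false)) /
        (C.gapLen j + C.len (j ++ [true]))) := by
  have := hν.1
  constructor
  · rintro ⟨N, H⟩
    refine ⟨N, fun j hj m => ?_⟩
    have hD := C.chord_pos j
    have hd := C.disj j
    have hle := C.le (j ++ [true] ++ List.replicate m false)
    have hb := C.b_zeros_le (j ++ [true]) m
    have ha := C.a_zeros (j ++ [true]) m
    have e1 := C.gapLen_add_len j m
    have e2 : C.gapLen j + C.len (j ++ [true]) = C.b (j ++ [true]) - C.b (j ++ [false]) := by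
      simpa using C.gapLen_add_len j 0
    rw [e1, e2]
    set ρ := (C.b (j ++ [true] ++ List.replicate m false) - C.b (j ++ [false])) /
      (C.b (j ++ [true]) - C.b (j ++ [false])) with hρ
    have hρ0 : 0 ≤ ρ := div_nonneg (by linarith) hD.le
    have h := H j hj ρ ⟨hρ0, by rw [hρ, div_le_one hD]; linarith⟩
    rw [hρ, div_mul_cancel₀ _ hD.ne', ← hρ, add_sub_cancel] at h
    have hsub : C.I (j ++ [true] ++ List.replicate m false) ⊆
        Ioc (C.b (j ++ [false])) (C.b (j ++ [true] ++ List.replicate m false)) := by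
      rintro x ⟨hx, hx'⟩
      exact ⟨by linarith, hx'⟩
    have h' := ENNReal.toReal_mono (by finiteness) ((measure_mono hsub).trans h)
    rw [ENNReal.toReal_mul, ENNReal.toReal_ofReal hρ0] at h'
    change ν.real _ ≤ ρ * ν.real _ at h'
    rw [hν.real_I, hν.real_I, List.length_append, pow_add, mul_inv, List.length_replicate,
      mul_comm] at h'
    rw [one_div]
    exact le_of_mul_le_mul_right h' (by positivity)
  · rintro ⟨N, H⟩
    have H' : ∀ j : List Bool, N ≤ j.length → ∀ m : ℕ,
        (2 ^ m : ℝ)⁻¹ * (C.b (j ++ [true]) - C.b (j ++ [false])) ≤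
          C.b (j ++ [true] ++ List.replicate m false) - C.b (j ++ [false]) := by
      intro j hj m
      have h := H j hj m
      have hD := C.chord_pos j
      have e1 := C.gapLen_add_len j m
      have e2 : C.gapLen j + C.len (j ++ [true]) = C.b (j ++ [true]) - C.b (j ++ [false]) := by
        simpa using C.gapLen_add_len j 0
      rwa [e1, e2, one_div, le_div_iff₀ hD] at h
    refine ⟨N, fun j hj ρ hρ => ?_⟩
    have hD := C.chord_pos j
    have hx0 : C.b (j ++ [false]) ≤
        C.b (j ++ [false]) + ρ * (C.b (j ++ [true]) - C.b (j ++ [false])) := by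
      linarith [mul_nonneg hρ.1 hD.le]
    have hx1 : C.b (j ++ [false]) + ρ * (C.b (j ++ [true]) - C.b (j ++ [false])) ≤
        C.b (j ++ [true]) := by
      linarith [mul_le_of_le_one_left hD.le hρ.2]
    have happ := fun n => hν.staircase_approx H' n j hj _ hx0 hx1
    simp only [add_sub_cancel_left, mul_div_cancel_right₀ _ hD.ne'] at happ
    have hlim : Tendsto (fun n : ℕ => ρ * (2 ^ (j.length + 1) : ℝ)⁻¹ +
        (2 ^ (j.length + 1) : ℝ)⁻¹ * (2 ^ n : ℝ)⁻¹) atTop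
        (nhds (ρ * (2 ^ (j.length + 1) : ℝ)⁻¹)) := by
      have h0 : Tendsto (fun n : ℕ => (2 ^ n : ℝ)⁻¹) atTop (nhds 0) :=
        tendsto_inv_atTop_zero.comp (tendsto_pow_atTop_atTop_of_one_lt (by norm_num))
      simpa using tendsto_const_nhds.add (h0.const_mul (2 ^ (j.length + 1) : ℝ)⁻¹)
    have hfin := ge_of_tendsto' hlim happ
    have hI := hν.real_I (j ++ [true])
    rw [List.length_append, List.length_singleton] at hI
    rw [← hI] at hfin
    rw [← ENNReal.toReal_le_toReal (by finiteness) (by finiteness), ENNReal.toReal_mul,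
      ENNReal.toReal_ofReal hρ.1]
    exact hfin
end
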